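/- The quantum determinant D = ad - bc + hac of the Jordanian quantum group is group-like: Δ(D) = D ⊗ D and ε(D) = 1, where ε(a)=ε(d)=1, ε(b)=ε(c)=0. -/

import Mathlib

open scoped TensorProduct

/-- Generators of the Jordanian quantum group algebra `A(R)`. -/
inductive JGen : Type | a | b | c | d

noncomputable def Fa : FreeAlgebra ℂ JGen := FreeAlgebra.ι ℂ JGen.a
noncomputable def Fb : FreeAlgebra ℂ JGen := FreeAlgebra.ι ℂ JGen.b
noncomputable def Fc : FreeAlgebra ℂ JGen := FreeAlgebra.ι ℂ JGen.c
noncomputable def Fd : FreeAlgebra ℂ JGen := FreeAlgebra.ι ℂ JGen.d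

/-- The six defining relations of the Jordanian quantum group `GL_{h,g}(2)`. -/
inductive JRel (h g : ℂ) : FreeAlgebra ℂ JGen → FreeAlgebra ℂ JGen → Prop
  | ca : JRel h g (Fc * Fa) (Fa * Fc - g • (Fc * Fc))
  | cd : JRel h g (Fc * Fd) (Fd * Fc - h • (Fc * Fc))
  | db : JRel h g (Fd * Fb) (Fb * Fd + g • (Fa * Fd - Fb * Fc + h • (Fa * Fc) - Fd * Fd))
  | ab : JRel h g (Fa * Fb) (Fb * Fa + h • (Fa * Fd - Fb * Fc + h • (Fa * Fc) - Fa * Fa))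
  | cb : JRel h g (Fc * Fb) (Fb * Fc - h • (Fa * Fc) - g • (Fd * Fc) + (g * h) • (Fc * Fc))
  | da : JRel h g (Fd * Fa) (Fa * Fd + h • (Fa * Fc) - g • (Fd * Fc))

/-- The Jordanian quantum group algebra `A(R)`. -/
abbrev JA (h g : ℂ) := RingQuot (JRel h g)

noncomputable def qa (h g : ℂ) : JA h g := RingQuot.mkAlgHom ℂ (JRel h g) Fa
noncomputable def qb (h g : ℂ) : JA h g := RingQuot.mkAlgHom ℂ (JRel h g) Fb
noncomputable def qc (h g : ℂ) : JA h g := RingQuot.mkAlgHom ℂ (JRel h g) Fc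
noncomputable def qd (h g : ℂ) : JA h g := RingQuot.mkAlgHom ℂ (JRel h g) Fd

/-- The quantum determinant `D = ad - bc + hac`. -/
noncomputable def qdet (h g : ℂ) : JA h g :=
  qa h g * qd h g - qb h g * qc h g + h • (qa h g * qc h g)

/-!
View the generators as a matrix `T = !![a, b; c, d]` and let `E = !![h, 1; -1, 0]`. The relations
of `A(R)` give `T E Tᵀ = D E`, so `D` is the multiplier of `T` as a similitude of the bilinear form
`E`. When the entries of two similitudes commute with each other, their product is a similitude and
the multipliers multiply; applied to `(T ⊗ 1) (1 ⊗ T) = Δ(T)` this gives `E Δ(D) = E (D ⊗ D)`, and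
`ε(T) = 1` gives `E ε(D) = E`. As `E` has an entry `1`, both equations can be cancelled.
-/

section Similitude

variable {R A B n : Type*} [CommSemiring R] [Semiring A] [Algebra R A] [Semiring B] [Algebra R B]
  [Fintype n]

/-- `T` is a similitude with multiplier `D` of the bilinear form with scalar matrix `E`, that is,
`T E Tᵀ = D E`. The entries of `T` need not commute, so the equation is written out to fix the order
of the products. It is the property of the generating matrix that makes `D` group-like. -/
def IsSimilitude (E : Matrix n n R) (T : Matrix n n A) (D : A) : Prop :=
  ∀ i j, ∑ k, ∑ l, E k l • (T i k * T j l) = E i j • D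

namespace IsSimilitude

variable {E : Matrix n n R} {S T : Matrix n n A} {D D' : A}

theorem one [DecidableEq n] (E : Matrix n n R) : IsSimilitude E (1 : Matrix n n A) 1 := by
  intro i j
  simp [Matrix.one_apply]

theorem map (hT : IsSimilitude E T D) (f : A →ₐ[R] B) : IsSimilitude E (T.map f) (f D) := by
  intro i j
  simpa only [map_sum, map_smul, map_mul, Matrix.map_apply] using congrArg f (hT i j)

theorem mul (hS : IsSimilitude E S D) (hT : IsSimilitude E T D')
    (hST : ∀ i j k l, Commute (S i j) (T k l)) : IsSimilitude E (S * T) (D * D') := by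
  intro i j
  have expand (k l : n) : E k l • ((S * T) i k * (S * T) j l) =
      ∑ p, ∑ q, S i p * S j q * (E k l • (T p k * T q l)) := by
    simp only [Matrix.mul_apply, Finset.sum_mul_sum, Finset.smul_sum, mul_smul_comm,
      (hST _ _ _ _).symm.mul_mul_mul_comm]
  calc ∑ k, ∑ l, E k l • ((S * T) i k * (S * T) j l)
      = ∑ k, ∑ l, ∑ p, ∑ q, S i p * S j q * (E k l • (T p k * T q l)) := by
        simp only [expand]
    _ = ∑ p, ∑ q, S i p * S j q * ∑ k, ∑ l, E k l • (T p k * T q l) := by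
        rw [Finset.sum_comm_cycle]
        simp only [Finset.mul_sum]
        exact Finset.sum_congr rfl fun p _ ↦ Finset.sum_comm_cycle
    _ = (∑ p, ∑ q, E p q • (S i p * S j q)) * D' := by
        simp only [hT _ _, Finset.sum_mul, smul_mul_assoc, mul_smul_comm]
    _ = E i j • (D * D') := by rw [hS, smul_mul_assoc]

theorem multiplier_unique (hD : IsSimilitude E T D) (hD' : IsSimilitude E T D') {i j : n}
    (hE : IsUnit (E i j)) : D = D' :=
  hE.smul_left_cancel.mp ((hD i j).symm.trans (hD' i j))

end IsSimilitude

open Algebra.TensorProduct in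
theorem qdet_grouplike_general [DecidableEq n] {E : Matrix n n R} {T : Matrix n n A} {D : A}
    (hT : IsSimilitude E T D) {i₀ j₀ : n} (hE : IsUnit (E i₀ j₀)) :
    (∀ Δ : A →ₐ[R] A ⊗[R] A,
      (∀ i j, Δ (T i j) = ∑ k, T i k ⊗ₜ T k j) → Δ D = D ⊗ₜ D) ∧
    (∀ ε : A →ₐ[R] R, (∀ i j, ε (T i j) = (1 : Matrix n n R) i j) → ε D = 1) := by
  constructor
  · intro Δ hΔ
    have map_coproduct :
        T.map Δ = T.map (includeLeft : A →ₐ[R] A ⊗[R] A) * T.map includeRight := by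
      ext i j
      simp [hΔ, Matrix.mul_apply]
    have similitude_tmul : IsSimilitude E (T.map Δ) (D ⊗ₜ D) := by
      simpa [map_coproduct] using
        (hT.map includeLeft).mul (hT.map includeRight) fun i j k l ↦ by simp [commute_iff_eq]
    exact (hT.map Δ).multiplier_unique similitude_tmul hE
  · intro ε hε
    have map_counit : T.map ε = 1 := Matrix.ext hε
    exact (hT.map ε).multiplier_unique (map_counit ▸ .one E) hE

end Similitude

theorem isSimilitude_jordanian_iff {R A : Type*} [CommRing R] [Ring A] [Algebra R A] (h : R)
    (a b c d D : A) :
    IsSimilitude !![h, 1; -1, 0] !![a, b; c, d] D ↔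
      a * b - b * a + h • (a * a) = h • D ∧ a * d - b * c + h • (a * c) = D ∧
      c * b - d * a + h • (c * a) = -D ∧ c * d - d * c + h • (c * c) = 0 := by
  simp [IsSimilitude, Fin.forall_fin_two, and_assoc, sub_eq_add_neg, add_assoc, add_comm (h • _)]

section Relations

variable (h g : ℂ)

theorem qa_mul_qb : qa h g * qb h g = qb h g * qa h g + h • (qdet h g - qa h g * qa h g) := by
  simpa [qa, qb, qc, qd, qdet] using RingQuot.mkAlgHom_rel ℂ (JRel.ab (h := h) (g := g))

theorem qc_mul_qa : qc h g * qa h g = qa h g * qc h g - g • (qc h g * qc h g) := by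
  simpa [qa, qc] using RingQuot.mkAlgHom_rel ℂ (JRel.ca (h := h) (g := g))

theorem qc_mul_qb : qc h g * qb h g = qb h g * qc h g - h • (qa h g * qc h g) -
    g • (qd h g * qc h g) + (g * h) • (qc h g * qc h g) := by
  simpa [qa, qb, qc, qd] using RingQuot.mkAlgHom_rel ℂ (JRel.cb (h := h) (g := g))

theorem qc_mul_qd : qc h g * qd h g = qd h g * qc h g - h • (qc h g * qc h g) := by
  simpa [qc, qd] using RingQuot.mkAlgHom_rel ℂ (JRel.cd (h := h) (g := g))

theorem qd_mul_qa : qd h g * qa h g = qa h g * qd h g + h • (qa h g * qc h g) -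
    g • (qd h g * qc h g) := by
  simpa [qa, qc, qd] using RingQuot.mkAlgHom_rel ℂ (JRel.da (h := h) (g := g))

theorem isSimilitude_qdet :
    IsSimilitude !![h, 1; -1, 0] !![qa h g, qb h g; qc h g, qd h g] (qdet h g) := by
  rw [isSimilitude_jordanian_iff]
  refine ⟨?_, rfl, ?_, ?_⟩
  · rw [qa_mul_qb]; module
  · rw [qc_mul_qa, qc_mul_qb, qd_mul_qa, qdet]; module
  · rw [qc_mul_qd]; module

end Relations

/-- The quantum determinant is group-like: any algebra homomorphisms `Δ`, `ε` given by
the matrix-element coproduct and counit on generators satisfy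
`Δ(D) = D ⊗ D` and `ε(D) = 1`. -/
theorem qdet_grouplike (h g : ℂ) :
    (∀ Δ : JA h g →ₐ[ℂ] (JA h g ⊗[ℂ] JA h g),
      (Δ (qa h g) = qa h g ⊗ₜ qa h g + qb h g ⊗ₜ qc h g ∧
       Δ (qb h g) = qa h g ⊗ₜ qb h g + qb h g ⊗ₜ qd h g ∧
       Δ (qc h g) = qc h g ⊗ₜ qa h g + qd h g ⊗ₜ qc h g ∧
       Δ (qd h g) = qc h g ⊗ₜ qb h g + qd h g ⊗ₜ qd h g) →
      Δ (qdet h g) = qdet h g ⊗ₜ qdet h g) ∧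
    (∀ ε : JA h g →ₐ[ℂ] ℂ,
      (ε (qa h g) = 1 ∧ ε (qb h g) = 0 ∧ ε (qc h g) = 0 ∧ ε (qd h g) = 1) →
      ε (qdet h g) = 1) := by
  simpa [Fin.forall_fin_two, and_assoc] using
    qdet_grouplike_general (isSimilitude_qdet h g) (i₀ := 0) (j₀ := 1) (by simp)
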